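/- arXiv:1807.03650 — 4 statements merged into one kernel-verified Lean document; each statement's English description precedes it below -/
import Mathlib

section
/- Let G be the complete graph on a finite vertex set V with edge set E, let M ≥ 1, let K = 1, and suppose there is no link thinning, so that on each layer the link set is exactly the set of edges both of whose endpoints are active on that layer, and a link is active in the merged network iff it exists on at least one layer. Then a link configuration x : E → {0,1} is feasible (i.e., occurs with positive probability in the M-layer model when every node activation probability q_i lies in (0,1)) if and only if the edge set {ℓ ∈ E : x_ℓ = 1} can be covered by at most M cliques, i.e., there exist vertex subsets S_1,…,S_M ⊆ V such that {ℓ ∈ E : x_ℓ = 1} equals the union over m = 1,…,M of the sets of edges with both endpoints in S_m. -/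
/-!
Since every outcome of the activation variables has positive probability and there are finitely
many of them, an event has positive probability as soon as some outcome realises it. An outcome is
the same thing as the family of active node sets `S m` of the layers, and without link thinning the
links on layer `m` are exactly those with both endpoints in `S m`; when `K = 1`, the active links
are the union of these cliques.
-/

open MeasureTheory Finset

/-- Bernoulli measure on `Bool` with success probability `p`. -/
noncomputable def bern (p : ℝ) : Measure Bool :=
  ENNReal.ofReal p • Measure.dirac true + ENNReal.ofReal (1 - p) • Measure.dirac false

theorem isOpenPosMeasure_of_singleton_ne_zero {α : Type*} [TopologicalSpace α]
    [MeasurableSpace α] {μ : Measure α} (h : ∀ a, μ {a} ≠ 0) : μ.IsOpenPosMeasure where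
  open_pos _ _ := fun ⟨a, ha⟩ h₀ => h a (measure_mono_null (Set.singleton_subset_iff.2 ha) h₀)

instance isFiniteMeasure_bern (p : ℝ) : IsFiniteMeasure (bern p) :=
  ⟨by simp [bern]⟩

theorem bern_singleton_ne_zero {p : ℝ} (hp : p ∈ Set.Ioo (0 : ℝ) 1) (b : Bool) :
    bern p {b} ≠ 0 := by
  cases b <;> simp [bern, hp.1, hp.2]

theorem pi_bern_pos_iff {κ : Type*} [Fintype κ] {p : κ → ℝ}
    (hp : ∀ k, p k ∈ Set.Ioo (0 : ℝ) 1) (A : Set (κ → Bool)) :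
    0 < Measure.pi (fun k => bern (p k)) A ↔ A.Nonempty := by
  have (k : κ) : (bern (p k)).IsOpenPosMeasure :=
    isOpenPosMeasure_of_singleton_ne_zero (bern_singleton_ne_zero (hp k))
  exact (isOpen_discrete A).measure_pos_iff _

section Layers

variable {ι V : Type*}

/-- The set of nodes active on layer `m` when `ω` records the values of the variables `Z_{m,i}`. -/
def activeNodes (ω : ι × V → Bool) (m : ι) : Set V := {v | ω (m, v) = true}

theorem activeNodes_surjective :
    Function.Surjective (activeNodes : (ι × V → Bool) → ι → Set V) := by
  classical
  intro S
  exact ⟨fun k => decide (k.2 ∈ S k.1), by ext; simp [activeNodes]⟩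

/-- The layers on which the link `e` exists when `S m` is the set of active nodes of layer `m` and
there is no link thinning. Its cardinality is the variable `W_e` of the model. -/
def linkLayers (S : ι → Set V) (e : Sym2 V) : Set ι := {m | ∀ v ∈ e, v ∈ S m}

theorem one_le_ncard_linkLayers_iff [Finite ι] (S : ι → Set V) (e : Sym2 V) :
    1 ≤ (linkLayers S e).ncard ↔ ∃ m, ∀ v ∈ e, v ∈ S m :=
  Set.ncard_pos

theorem stmt1_general [Fintype ι] [Fintype V] (G : SimpleGraph V) (K : ℕ) (q : ι × V → ℝ)
    (hq : ∀ k, q k ∈ Set.Ioo (0 : ℝ) 1) (x : Sym2 V → Bool) :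
    0 < (Measure.pi fun k => bern (q k))
          {ω | ∀ e ∈ G.edgeSet, K ≤ (linkLayers (activeNodes ω) e).ncard ↔ x e = true}
      ↔ ∃ S : ι → Set V, ∀ e ∈ G.edgeSet, x e = true ↔ K ≤ (linkLayers S e).ncard := by
  rw [pi_bern_pos_iff hq, activeNodes_surjective.exists]
  exact exists_congr fun _ => forall₂_congr fun _ _ => iff_comm

end Layers

/-- on the complete graph with `M` layers, no link thinning and `K = 1`,
a link configuration `x` is feasible (occurs with positive probability when every node
activation probability lies in `(0,1)`) iff the set of active links can be covered by
at most `M` cliques. -/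
theorem stmt1 {V : Type} [Fintype V] [DecidableEq V] (M : ℕ) (hM : 1 ≤ M)
    (q : V → ℝ) (hq : ∀ i, q i ∈ Set.Ioo (0 : ℝ) 1) (x : Sym2 V → Bool) :
    0 < (Measure.pi fun k : Fin M × V => bern (q k.2))
          {ω : Fin M × V → Bool | ∀ e : Sym2 V, ¬e.IsDiag →
            ((∃ m : Fin M, ∀ v ∈ e, ω (m, v) = true) ↔ x e = true)}
      ↔ ∃ S : Fin M → Set V, ∀ e : Sym2 V, ¬e.IsDiag →
          (x e = true ↔ ∃ m : Fin M, ∀ v ∈ e, v ∈ S m) := by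
  simpa [one_le_ncard_linkLayers_iff, activeNodes] using
    stmt1_general ⊤ 1 (fun k : Fin M × V => q k.2) (fun k => hq k.2) x
end

section
/- In the line model with M layers, for every m ∈ {0,1,…,M}: Q_{0^{(1)}}(m) = q̄^m, and for every n ≥ 2, Q_{0^{(n)}}(m) = q̄^m [1 − (n−2)q² + P_{n−1}(q)]^m [1 − (n−1)q² + P_n(q)]^{M−m}, where 0^{(n)} is the all-zeros configuration of length n. -/
open MeasureTheory ProbabilityTheory Finset

/-- The line model with `M` layers, `n` links (hence `n+1` nodes), node activation
probability `q`: every node is active on every layer independently with probability `q`. -/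
noncomputable def lineμ (M n : ℕ) (q : ℝ) : Measure ((Fin M × Fin (n + 1)) → Bool) :=
  Measure.pi fun _ => bern q

/-- Link `e_{j+1} = (j+1, j+2)` (1-based) is active: some layer has both endpoints active. -/
def act {M n : ℕ} (j : Fin n) (ω : (Fin M × Fin (n + 1)) → Bool) : Prop :=
  ∃ m : Fin M, ω (m, j.castSucc) = true ∧ ω (m, j.succ) = true

/-- The event that the links are in configuration `x` (1-based: link `e_j` is active
iff `x j = 1`). -/
def cfg {M n : ℕ} (x : ℕ → ℝ) : Set ((Fin M × Fin (n + 1)) → Bool) :=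
  {ω | ∀ j : Fin n, (act j ω ↔ x (j.val + 1) = 1)}

/-- The event that the set of layers on which the last node `n+1` is active equals `A`. -/
def lastIn {M n : ℕ} (A : Finset (Fin M)) : Set ((Fin M × Fin (n + 1)) → Bool) :=
  {ω | ∀ k : Fin M, (ω (k, Fin.last n) = true ↔ k ∈ A)}

/-- `Q_{x^{(n)}}(m)`: conditional probability of configuration `x` given that the set of
layers on which node `n+1` is active equals the fixed set `A` (of cardinality `m`). -/
noncomputable def Qcond (M n : ℕ) (q : ℝ) (x : ℕ → ℝ) (A : Finset (Fin M)) : ℝ :=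
  (ProbabilityTheory.cond (lineμ M n q) (lastIn A) (cfg x)).toReal

/-- The polynomials `P_k(q)`: `P₁ = P₂ = 0`,
`P_k = (1−q) P_{k−1} + q(1−q) P_{k−2} + q³ + (k−3) q⁴` for `k ≥ 3`. -/
noncomputable def Ppoly (q : ℝ) : ℕ → ℝ
  | 0 => 0
  | 1 => 0
  | 2 => 0
  | (k + 3) => (1 - q) * Ppoly q (k + 2) + q * (1 - q) * Ppoly q (k + 1) + q ^ 3 + (k : ℝ) * q ^ 4

/-!
No link is active iff on every layer no two consecutive nodes are active. The layers are independent
and the conditioning event constrains each of them separately, so the conditional probability is a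
product over the layers. Let `p n` be the probability that among `n` nodes of a layer no two
consecutive ones are active. A layer of `n + 1` nodes contributes `p n` when its last node is
inactive; when the last node is active, the one before it must be inactive, and the contribution is
`(1 - q) * p (n - 1)`. Splitting on the last node gives
`p (n + 2) = (1 - q) * p (n + 1) + q * (1 - q) * p n`, and `1 - (n - 1) * q ^ 2 + P_n` satisfies the
same recursion with the same values `1` and `1 - q ^ 2` at `n = 1` and `n = 2`.
-/

section ProductMeasure

lemma cond_preimage_of_measurePreserving {α β : Type*} [MeasurableSpace α] [MeasurableSpace β]
    {μ : Measure α} {ν : Measure β} {f : α → β} (hf : MeasurePreserving f μ ν) {s t : Set β}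
    (hs : MeasurableSet s) (ht : MeasurableSet t) :
    μ[f ⁻¹' t | f ⁻¹' s] = ν[t | s] := by
  rw [cond_apply (hf.measurable hs), cond_apply hs, ← Set.preimage_inter,
    hf.measure_preimage hs.nullMeasurableSet, hf.measure_preimage (hs.inter ht).nullMeasurableSet]

lemma measurePreserving_curry_pi {ι κ α : Type*} [Fintype ι] [Fintype κ] [MeasurableSpace α]
    (μ : ι → κ → Measure α) [∀ i j, IsProbabilityMeasure (μ i j)] :
    MeasurePreserving (MeasurableEquiv.curry ι κ α) (Measure.pi fun p : ι × κ => μ p.1 p.2)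
      (Measure.pi fun i => Measure.pi (μ i)) where
  measurable := (MeasurableEquiv.curry ι κ α).measurable
  map_eq := by
    simpa only [Measure.infinitePi_eq_pi] using Measure.infinitePi_map_curry μ

lemma cond_pi_pi {ι : Type*} [Fintype ι] {α : ι → Type*} [∀ i, MeasurableSpace (α i)]
    (μ : ∀ i, Measure (α i)) [∀ i, IsFiniteMeasure (μ i)] {s : ∀ i, Set (α i)}
    (hs : ∀ i, MeasurableSet (s i)) (t : ∀ i, Set (α i)) :
    (Measure.pi μ)[Set.univ.pi t | Set.univ.pi s] = ∏ i, (μ i)[t i | s i] := by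
  simp only [cond_apply (MeasurableSet.univ_pi hs), cond_apply (hs _), ← Set.pi_inter_distrib,
    Measure.pi_pi, Finset.prod_mul_distrib]
  rw [ENNReal.prod_inv_distrib fun _ _ j _ _ => .inr (measure_ne_top (μ j) (s j))]

variable {n : ℕ} {α : Fin (n + 1) → Type*} [∀ i, MeasurableSpace (α i)]
  (μ : ∀ i, Measure (α i))

lemma measure_pi_eval_eq_inter [∀ i, SigmaFinite (μ i)] (i : Fin (n + 1)) (a : α i)
    (s : Set (∀ j, α j)) :
    Measure.pi μ ({g | g i = a} ∩ s) =
      μ i {a} * Measure.pi (fun j => μ (i.succAbove j)) {g | i.insertNth a g ∈ s} := by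
  have hpre : {g | g i = a} ∩ s = MeasurableEquiv.piFinSuccAbove α i ⁻¹'
      ({a} ×ˢ {g | i.insertNth a g ∈ s}) := by
    ext g
    simp only [Set.mem_inter_iff, Set.mem_preimage, Set.mem_prod, Set.mem_singleton_iff]
    refine and_congr_right fun hg => ?_
    subst hg
    change g ∈ s ↔ i.insertNth (g i) (i.removeNth g) ∈ s
    rw [Fin.insertNth_self_removeNth]
  rw [hpre, (measurePreserving_piFinSuccAbove μ i).measure_preimage_equiv, Measure.prod_prod]

lemma cond_pi_eval_eq [∀ i, IsProbabilityMeasure (μ i)] (i : Fin (n + 1))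
    [MeasurableSingletonClass (α i)] {a : α i} (ha : μ i {a} ≠ 0) (s : Set (∀ j, α j)) :
    (Measure.pi μ)[s | {g | g i = a}] =
      Measure.pi (fun j => μ (i.succAbove j)) {g | i.insertNth a g ∈ s} := by
  have hmeas : MeasurableSet {g : ∀ j, α j | g i = a} :=
    measurable_pi_apply i (measurableSet_singleton a)
  have hprob : Measure.pi μ {g | g i = a} = μ i {a} :=
    (measurePreserving_eval μ i).measure_preimage (measurableSet_singleton a).nullMeasurableSet
  rw [cond_apply hmeas, hprob, measure_pi_eval_eq_inter, ← mul_assoc,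
    ENNReal.inv_mul_cancel ha (measure_ne_top _ _), one_mul]

end ProductMeasure

/-- Activity patterns of `n` nodes of one layer in which no two consecutive nodes are active, so
that the layer activates no link. -/
def sparsePatterns (n : ℕ) : Set (Fin n → Bool) :=
  {g | ∀ i j : Fin n, i.val + 1 = j.val → ¬(g i = true ∧ g j = true)}

/-- The probability that no two consecutive nodes among `n` are active, when the nodes have
independent statuses of law `μ`. -/
noncomputable def sparseProb (μ : Measure Bool) (n : ℕ) : ℝ :=
  (Measure.pi fun _ : Fin n => μ).real (sparsePatterns n)

lemma mem_sparsePatterns_succ {n : ℕ} {g : Fin (n + 1) → Bool} :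
    g ∈ sparsePatterns (n + 1) ↔ ∀ j : Fin n, ¬(g j.castSucc = true ∧ g j.succ = true) := by
  refine ⟨fun h j => h _ _ (by simp), fun h i j hij => ?_⟩
  obtain ⟨k, rfl⟩ : ∃ k : Fin n, k.succ = j := Fin.exists_succ_eq.2 (by rintro rfl; simp at hij)
  obtain rfl : i = k.castSucc := Fin.ext (by simpa using hij)
  exact h k

lemma snoc_false_mem_sparsePatterns {n : ℕ} {g : Fin n → Bool} :
    (Fin.snoc g false : Fin (n + 1) → Bool) ∈ sparsePatterns (n + 1) ↔ g ∈ sparsePatterns n := by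
  cases n with
  | zero => simp [sparsePatterns]
  | succ n =>
    simp only [mem_sparsePatterns_succ, Fin.forall_fin_succ', Fin.snoc_castSucc, Fin.succ_castSucc,
      Fin.succ_last, Fin.snoc_last, Bool.false_eq_true, and_false, not_false_eq_true, and_true]

lemma snoc_true_mem_sparsePatterns {n : ℕ} {g : Fin (n + 1) → Bool} :
    (Fin.snoc g true : Fin (n + 2) → Bool) ∈ sparsePatterns (n + 2) ↔
      g (Fin.last n) = false ∧ g ∈ sparsePatterns (n + 1) := by
  simp only [mem_sparsePatterns_succ, Fin.forall_fin_succ', Fin.snoc_castSucc, Fin.succ_castSucc,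
    Fin.succ_last, Fin.snoc_last, and_true, Bool.not_eq_true]
  exact and_comm

section SparseProb

variable (μ : Measure Bool)

lemma sparseProb_zero : sparseProb μ 0 = 1 := by
  simp [sparseProb, sparsePatterns, measureReal_def]

lemma sparseProb_one [IsProbabilityMeasure μ] : sparseProb μ 1 = 1 := by
  simp [sparseProb, sparsePatterns]

lemma measureReal_last_false_inter_sparsePatterns [SigmaFinite μ] (n : ℕ) :
    (Measure.pi fun _ : Fin (n + 1) => μ).real
      ({g | g (Fin.last n) = false} ∩ sparsePatterns (n + 1)) =
      μ.real {false} * sparseProb μ n := by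
  rw [measureReal_def, measure_pi_eval_eq_inter, ENNReal.toReal_mul]
  simp only [Fin.insertNth_last', snoc_false_mem_sparsePatterns]
  rfl

lemma measureReal_last_true_inter_sparsePatterns [SigmaFinite μ] (n : ℕ) :
    (Measure.pi fun _ : Fin (n + 2) => μ).real
      ({g | g (Fin.last (n + 1)) = true} ∩ sparsePatterns (n + 2)) =
      μ.real {true} * (μ.real {false} * sparseProb μ n) := by
  rw [measureReal_def, measure_pi_eval_eq_inter, ENNReal.toReal_mul,
    ← measureReal_last_false_inter_sparsePatterns]
  simp only [Fin.insertNth_last', snoc_true_mem_sparsePatterns]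
  rfl

lemma sparseProb_add_two [IsFiniteMeasure μ] (n : ℕ) :
    sparseProb μ (n + 2) =
      μ.real {false} * sparseProb μ (n + 1) +
        μ.real {true} * (μ.real {false} * sparseProb μ n) := by
  have hmeas : MeasurableSet {g : Fin (n + 2) → Bool | g (Fin.last (n + 1)) = false} :=
    (Set.toFinite _).measurableSet
  have hcompl : sparsePatterns (n + 2) \ {g | g (Fin.last (n + 1)) = false} =
      {g | g (Fin.last (n + 1)) = true} ∩ sparsePatterns (n + 2) := by
    ext g
    simp [and_comm]
  rw [← measureReal_last_false_inter_sparsePatterns, ← measureReal_last_true_inter_sparsePatterns,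
    ← hcompl, Set.inter_comm, measureReal_inter_add_sdiff hmeas]
  rfl

variable {μ} [IsProbabilityMeasure μ]

lemma cond_real_last_false_sparsePatterns (hμ : μ {false} ≠ 0) (n : ℕ) :
    ((Measure.pi fun _ : Fin (n + 1) => μ)[|{g | g (Fin.last n) = false}]).real
      (sparsePatterns (n + 1)) = sparseProb μ n := by
  rw [measureReal_def, cond_pi_eval_eq _ _ hμ]
  simp only [Fin.insertNth_last', snoc_false_mem_sparsePatterns]
  rfl

lemma cond_real_last_true_sparsePatterns (hμ : μ {true} ≠ 0) (n : ℕ) :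
    ((Measure.pi fun _ : Fin (n + 2) => μ)[|{g | g (Fin.last (n + 1)) = true}]).real
      (sparsePatterns (n + 2)) = μ.real {false} * sparseProb μ n := by
  rw [measureReal_def, cond_pi_eval_eq _ _ hμ, ← measureReal_last_false_inter_sparsePatterns]
  simp only [Fin.insertNth_last', snoc_true_mem_sparsePatterns]
  rfl

end SparseProb

section Bernoulli

variable {q : ℝ}

lemma isProbabilityMeasure_bern (hq : q ∈ Set.Icc (0 : ℝ) 1) : IsProbabilityMeasure (bern q) where
  measure_univ := by
    simp [bern, ← ENNReal.ofReal_add hq.1 (sub_nonneg.2 hq.2)]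

lemma bern_real_true (hq : 0 ≤ q) : (bern q).real {true} = q := by
  simp [measureReal_def, bern, hq]

lemma bern_real_false (hq : q ≤ 1) : (bern q).real {false} = 1 - q := by
  simp [measureReal_def, bern, hq]

lemma sparseProb_bern_succ (hq : q ∈ Set.Icc (0 : ℝ) 1) (n : ℕ) :
    sparseProb (bern q) (n + 1) = 1 - n * q ^ 2 + Ppoly q (n + 1) := by
  have := isProbabilityMeasure_bern hq
  have hrec (n : ℕ) : sparseProb (bern q) (n + 2) =
      (1 - q) * sparseProb (bern q) (n + 1) + q * ((1 - q) * sparseProb (bern q) n) := by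
    rw [sparseProb_add_two, bern_real_true hq.1, bern_real_false hq.2]
  induction n using Nat.twoStepInduction with
  | zero => simp [sparseProb_one, Ppoly]
  | one =>
    rw [hrec, sparseProb_one, sparseProb_zero, Ppoly]
    push_cast
    ring
  | more n ih₁ ih₂ =>
    rw [hrec, ih₁, ih₂, Ppoly]
    push_cast
    ring

end Bernoulli

section LineModel

variable {M n : ℕ} (A : Finset (Fin M))

lemma lastIn_eq_preimage_curry :
    (lastIn A : Set (Fin M × Fin (n + 1) → Bool)) =
      MeasurableEquiv.curry (Fin M) (Fin (n + 1)) Bool ⁻¹'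
        Set.univ.pi fun k => {g | g (Fin.last n) = decide (k ∈ A)} := by
  ext ω
  simp only [lastIn, Set.mem_ofPred_eq, Set.mem_preimage, Set.mem_univ_pi]
  exact forall_congr' fun k => by simp [Bool.eq_iff_iff (b := decide (k ∈ A))]

lemma cfg_zero_eq_preimage_curry :
    (cfg (fun _ => 0) : Set (Fin M × Fin (n + 1) → Bool)) =
      MeasurableEquiv.curry (Fin M) (Fin (n + 1)) Bool ⁻¹'
        Set.univ.pi fun _ => sparsePatterns (n + 1) := by
  ext ω
  simp only [cfg, act, zero_ne_one, iff_false, not_exists, Set.mem_ofPred_eq, Set.mem_preimage,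
    Set.mem_univ_pi, mem_sparsePatterns_succ]
  exact forall_comm

lemma Qcond_zero_eq_prod {q : ℝ} (hq : q ∈ Set.Icc (0 : ℝ) 1) :
    Qcond M n q (fun _ => 0) A =
      ∏ k, ((Measure.pi fun _ => bern q)[|{g | g (Fin.last n) = decide (k ∈ A)}]).real
        (sparsePatterns (n + 1)) := by
  have := isProbabilityMeasure_bern hq
  have hmeas (s : Set (Fin (n + 1) → Bool)) : MeasurableSet s := (Set.toFinite s).measurableSet
  rw [Qcond, lineμ, lastIn_eq_preimage_curry, cfg_zero_eq_preimage_curry,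
    cond_preimage_of_measurePreserving (measurePreserving_curry_pi fun _ _ => bern q)
      (.univ_pi fun _ => hmeas _) (.univ_pi fun _ => hmeas _),
    cond_pi_pi _ fun _ => hmeas _, ENNReal.toReal_prod]
  rfl

lemma Qcond_zero_succ {q : ℝ} (hq : q ∈ Set.Ioo (0 : ℝ) 1) :
    Qcond M (n + 1) q (fun _ => 0) A =
      ((1 - q) * sparseProb (bern q) n) ^ #A * sparseProb (bern q) (n + 1) ^ (M - #A) := by
  have hIcc := Set.Ioo_subset_Icc_self hq
  have := isProbabilityMeasure_bern hIcc
  have htrue : bern q {true} ≠ 0 := by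
    rw [← measureReal_ne_zero_iff, bern_real_true hIcc.1]
    exact hq.1.ne'
  have hfalse : bern q {false} ≠ 0 := by
    rw [← measureReal_ne_zero_iff, bern_real_false hIcc.2]
    exact (sub_pos.2 hq.2).ne'
  have hlayer (k : Fin M) :
      ((Measure.pi fun _ => bern q)[|{g | g (Fin.last (n + 1)) = decide (k ∈ A)}]).real
        (sparsePatterns (n + 2)) =
      if k ∈ A then (1 - q) * sparseProb (bern q) n else sparseProb (bern q) (n + 1) := by
    split_ifs with hk
    · simp only [hk, decide_true, cond_real_last_true_sparsePatterns htrue, bern_real_false hIcc.2]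
    · simp only [hk, decide_false, cond_real_last_false_sparsePatterns hfalse]
  simp only [Qcond_zero_eq_prod A hIcc, hlayer, Finset.prod_ite, Finset.prod_const,
    Finset.filter_univ_mem, Finset.filter_notMem_eq_sdiff, ← Finset.compl_eq_univ_sdiff,
    Finset.card_compl, Fintype.card_fin]

end LineModel

/-- `Q_{0^{(1)}}(m) = (1−q)^m` and, for `n ≥ 2`,
`Q_{0^{(n)}}(m) = (1−q)^m [1−(n−2)q² + P_{n−1}(q)]^m [1−(n−1)q² + P_n(q)]^{M−m}`. -/
theorem stmt4 (M : ℕ) (hM : 1 ≤ M) (q : ℝ) (hq : q ∈ Set.Ioo (0 : ℝ) 1) :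
    (∀ m ≤ M, ∀ A : Finset (Fin M), A.card = m →
        Qcond M 1 q (fun _ => 0) A = (1 - q) ^ m) ∧
    (∀ n, 2 ≤ n → ∀ m ≤ M, ∀ A : Finset (Fin M), A.card = m →
        Qcond M n q (fun _ => 0) A
          = (1 - q) ^ m * (1 - ((n : ℝ) - 2) * q ^ 2 + Ppoly q (n - 1)) ^ m
              * (1 - ((n : ℝ) - 1) * q ^ 2 + Ppoly q n) ^ (M - m)) := by
  have := isProbabilityMeasure_bern (Set.Ioo_subset_Icc_self hq)
  have hsparse := sparseProb_bern_succ (Set.Ioo_subset_Icc_self hq)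
  constructor
  · rintro m - A rfl
    rw [Qcond_zero_succ A hq, sparseProb_zero, sparseProb_one, mul_one, one_pow, mul_one]
  · rintro n hn m - A rfl
    obtain ⟨n, rfl⟩ := Nat.exists_eq_add_of_le' hn
    have hprev : sparseProb (bern q) (n + 1) =
        1 - (((n + 2 : ℕ) : ℝ) - 2) * q ^ 2 + Ppoly q (n + 2 - 1) := by
      simp [hsparse]
    have hcurr : sparseProb (bern q) (n + 2) =
        1 - (((n + 2 : ℕ) : ℝ) - 1) * q ^ 2 + Ppoly q (n + 2) := by
      rw [hsparse]; push_cast; ring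
    rw [Qcond_zero_succ A hq, hprev, hcurr, mul_pow]
end

section
/- In the line model with M layers, for every n ≥ 1 and every x^{(n)} = (x_1,…,x_n) ∈ {0,1}^n, the probability of configuration x^{(n)} satisfies Q_{x^{(n)}} = Σ_{j=0}^{n} h_j Q_{0^{(n−j)}} ∏_{l=j+1}^{n} ((1−x_l) − x_l), where Q_{0^{(0)}} = 1, Q_{0^{(k)}} = [1 − k q² + P_{k+1}(q)]^M for k ≥ 1, and empty products equal 1. -/
open MeasureTheory ProbabilityTheory Finset

/-- The coefficients `h_j`: `h₀ = 1`, `h₁ = x₁`, and for `j ≥ 2`,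
`h_j = x_j ∑_{r=0}^{j−1} [1−(j−1−r)q² + P_{j−r}(q)]^M h_r ∏_{l=r+1}^{j−1} ((1−x_l) − x_l)`. -/
noncomputable def hcoef (M : ℕ) (q : ℝ) (x : ℕ → ℝ) : ℕ → ℝ
  | 0 => 1
  | 1 => x 1
  | (j + 2) => x (j + 2) *
      ∑ r ∈ (Finset.range (j + 2)).attach,
        (1 - ((j : ℝ) + 1 - (r.1 : ℝ)) * q ^ 2 + Ppoly q (j + 2 - r.1)) ^ M
          * hcoef M q x r.1
          * ∏ l ∈ Finset.Icc (r.1 + 1) (j + 1), ((1 - x l) - x l)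
  termination_by j => j
  decreasing_by
    have := Finset.mem_range.mp r.2
    omega

/-- `Q_{x^{(n)}}`: unconditional probability of configuration `x`. -/
noncomputable def Qabs (M n : ℕ) (q : ℝ) (x : ℕ → ℝ) : ℝ :=
  ((lineμ M n q) (cfg x)).toReal

/-- `Q_{0^{(k)}}`: `Q_{0^{(0)}} = 1` and `Q_{0^{(k)}} = [1 − k q² + P_{k+1}(q)]^M` for `k ≥ 1`. -/
noncomputable def Q0a (M : ℕ) (q : ℝ) : ℕ → ℝ
  | 0 => 1
  | (k + 1) => (1 - ((k : ℝ) + 1) * q ^ 2 + Ppoly q (k + 2)) ^ M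

/-!
Whether a link is in state `y ∈ {0, 1}` has indicator `y + (1 - 2y) · 1{link inactive}`. Adding
nodes one at a time, the transfer operator of a link is therefore a rank-one operator, which forgets
the link and restarts the chain from an independent node, plus `1 - 2y` times the operator `T` of an
inactive link. Unrolling the chain from the right down to the last forgotten link `j` leaves
`Q_{x^{(j-1)}}` to its left and `n - j` inactive links to its right, so that
`h_j = x_j Q_{x^{(j-1)}}`. Layers being independent, `T` is a tensor power of the single-layer
operator, and the two-step recursion of that `2 × 2` operator is the one defining `P_k`.
-/

section RankOnePerturbation

variable {R V : Type*} [CommSemiring R] [AddCommMonoid V] [Module R V]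

lemma sum_smul_pow_apply_succ (T : Module.End R V) (h s : ℕ → R) (v : V) (n : ℕ) :
    ∑ j ∈ range (n + 2), (h j * ∏ l ∈ Icc (j + 1) (n + 1), s l) • (T ^ (n + 1 - j)) v
      = h (n + 1) • v
        + s (n + 1) •
          T (∑ j ∈ range (n + 1), (h j * ∏ l ∈ Icc (j + 1) n, s l) • (T ^ (n - j)) v) := by
  have hterm : ∀ j ∈ range (n + 1),
      (h j * ∏ l ∈ Icc (j + 1) (n + 1), s l) • (T ^ (n + 1 - j)) v
        = s (n + 1) • T ((h j * ∏ l ∈ Icc (j + 1) n, s l) • (T ^ (n - j)) v) := by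
    intro j hj
    have hjn : j ≤ n := mem_range_succ_iff.mp hj
    rw [prod_Icc_succ_top (by omega), Nat.succ_sub hjn, pow_succ', Module.End.mul_apply, map_smul,
      smul_smul]
    congr 1
    ring
  rw [sum_range_succ, sum_congr rfl hterm, map_sum, smul_sum, add_comm]
  simp

variable {T : Module.End R V} {φ : V →ₗ[R] R} {x s h : ℕ → R} {v : ℕ → V}

lemma eq_sum_smul_pow_apply_of_rankOne_perturbation
    (hv : ∀ n, v (n + 1) = (x (n + 1) * φ (v n)) • v 0 + s (n + 1) • T (v n))
    (h_zero : h 0 = 1)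
    (h_succ : ∀ n, h (n + 1) = x (n + 1) *
      ∑ j ∈ range (n + 1), h j * φ ((T ^ (n - j)) (v 0)) * ∏ l ∈ Icc (j + 1) n, s l) (n : ℕ) :
    v n = ∑ j ∈ range (n + 1), (h j * ∏ l ∈ Icc (j + 1) n, s l) • (T ^ (n - j)) (v 0) := by
  induction n with
  | zero => simp [h_zero]
  | succ n ih =>
    have hφ : h (n + 1) = x (n + 1) * φ (v n) := by
      rw [h_succ, ih, map_sum]
      simp only [map_smul, smul_eq_mul, mul_right_comm]
    rw [sum_smul_pow_apply_succ, ← ih, hφ, hv]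

lemma apply_eq_sum_of_rankOne_perturbation
    (hv : ∀ n, v (n + 1) = (x (n + 1) * φ (v n)) • v 0 + s (n + 1) • T (v n))
    (h_zero : h 0 = 1)
    (h_succ : ∀ n, h (n + 1) = x (n + 1) *
      ∑ j ∈ range (n + 1), h j * φ ((T ^ (n - j)) (v 0)) * ∏ l ∈ Icc (j + 1) n, s l) (n : ℕ) :
    φ (v n) = ∑ j ∈ range (n + 1), h j * φ ((T ^ (n - j)) (v 0)) * ∏ l ∈ Icc (j + 1) n, s l := by
  rw [eq_sum_smul_pow_apply_of_rankOne_perturbation hv h_zero h_succ n, map_sum]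
  simp only [map_smul, smul_eq_mul, mul_right_comm]

end RankOnePerturbation

section Transfer

variable {S R : Type*} [CommSemiring R]

/-- The weight of the path `c` in the chain with node weight `w` and link weights `K`. -/
def pathWeight (w : S → R) (K : ℕ → S → S → R) {n : ℕ} (c : Fin (n + 1) → S) : R :=
  (∏ i, w (c i)) * ∏ j : Fin n, K j (c j.castSucc) (c j.succ)

lemma pathWeight_snoc (w : S → R) (K : ℕ → S → S → R) {n : ℕ} (c : Fin (n + 1) → S) (b : S) :
    pathWeight w K (Fin.snoc c b : Fin (n + 2) → S)
      = w b * (pathWeight w K c * K n (c (Fin.last n)) b) := by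
  rw [pathWeight, pathWeight, Fin.prod_univ_castSucc (n := n + 1),
    Fin.prod_univ_castSucc (n := n) fun j => K j _ _]
  simp only [Fin.snoc_last, Fin.snoc_castSucc, Fin.succ_last, ← Fin.castSucc_succ,
    Fin.val_castSucc, Fin.val_last]
  ring

variable [Fintype S]

/-- The transfer operator appending one node, of weight `w`, to a chain through a link of
weight `K`; vectors are indexed by the state of the last node. -/
def transferOp (w : S → R) (K : S → S → R) : Module.End R (S → R) where
  toFun v b := w b * ∑ a, v a * K a b
  map_add' v v' := by ext b; simp [add_mul, mul_add, sum_add_distrib]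
  map_smul' c v := by ext b; simp [mul_sum, mul_assoc, mul_left_comm]

lemma transferOp_apply (w : S → R) (K : S → S → R) (v : S → R) (b : S) :
    transferOp w K v b = w b * ∑ a, v a * K a b := rfl

lemma transferOp_affine (w : S → R) (K : S → S → R) (y t : R) (v : S → R) :
    transferOp w (fun a b => y + t * K a b) v = (y * ∑ a, v a) • w + t • transferOp w K v := by
  ext b
  simp only [transferOp_apply, Pi.add_apply, Pi.smul_apply, smul_eq_mul, mul_add,
    sum_add_distrib, ← sum_mul, mul_left_comm _ t, ← mul_sum]
  ring

/-- The partial partition function of a chain with `n + 1` nodes of weight `w` and links of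
weights `K 0, …, K (n - 1)`, as a function of the state of the last node. -/
def chainVec (w : S → R) (K : ℕ → S → S → R) : ℕ → S → R
  | 0 => w
  | n + 1 => transferOp w (K n) (chainVec w K n)

lemma sum_pathWeight_mul (w : S → R) (K : ℕ → S → S → R) (n : ℕ) (F : S → R) :
    ∑ c : Fin (n + 1) → S, pathWeight w K c * F (c (Fin.last n))
      = ∑ b, chainVec w K n b * F b := by
  induction n generalizing F with
  | zero =>
    refine Fintype.sum_equiv (Equiv.funUnique (Fin 1) S) _ _ fun c => ?_
    simp [pathWeight, chainVec]
  | succ n ih =>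
    rw [← (Fin.snocEquiv fun _ : Fin (n + 2) => S).sum_comp, Fintype.sum_prod_type]
    refine sum_congr rfl fun b _ => ?_
    have hsnoc (c : Fin (n + 1) → S) :
        pathWeight w K (Fin.snocEquiv (fun _ => S) (b, c))
            * F (Fin.snocEquiv (fun _ => S) (b, c) (Fin.last (n + 1)))
          = w b * (pathWeight w K c * K n (c (Fin.last n)) b) * F b := by
      rw [← pathWeight_snoc, Fin.snocEquiv_apply, Fin.snoc_last]
      rfl
    rw [sum_congr rfl fun c _ => hsnoc c, ← sum_mul, ← mul_sum, ih fun a => K n a b, chainVec,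
      transferOp_apply]

lemma sum_pathWeight (w : S → R) (K : ℕ → S → S → R) (n : ℕ) :
    ∑ c : Fin (n + 1) → S, pathWeight w K c = ∑ b, chainVec w K n b := by
  simpa using sum_pathWeight_mul w K n fun _ => 1

end Transfer

section TensorPower

variable (ι : Type*) {S R : Type*} [Fintype ι] [CommSemiring R]

/-- The tensor power `f^{⊗ι}` of a function: the weight of the states of a node on all layers
`i : ι`, when `f` is its weight on one layer. -/
def tensorPow (f : S → R) (a : ι → S) : R := ∏ i, f (a i)

/-- The tensor power of a link weight, as a kernel between states of nodes on all layers `i : ι`. -/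
def tensorPowKernel (K : S → S → R) (a b : ι → S) : R :=
  ∏ i, K (a i) (b i)

variable {ι} [DecidableEq ι] [Fintype S]

lemma sum_tensorPow (f : S → R) : ∑ a, tensorPow ι f a = (∑ s, f s) ^ Fintype.card ι := by
  simp only [tensorPow, ← Fintype.prod_sum, prod_const, card_univ]

lemma transferOp_tensorPow (w : S → R) (K : S → S → R) (v : S → R) :
    transferOp (tensorPow ι w) (tensorPowKernel ι K) (tensorPow ι v)
      = tensorPow ι (transferOp w K v) := by
  ext b
  simp only [transferOp_apply, tensorPow, tensorPowKernel, ← prod_mul_distrib,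
    ← Fintype.prod_sum (fun i s => v s * K s (b i))]

lemma transferOp_pow_tensorPow (w : S → R) (K : S → S → R) (v : S → R) (k : ℕ) :
    (transferOp (tensorPow ι w) (tensorPowKernel ι K) ^ k) (tensorPow ι v)
      = tensorPow ι ((transferOp w K ^ k) v) := by
  induction k with
  | zero => rfl
  | succ k ih =>
    rw [pow_succ', pow_succ', Module.End.mul_apply, Module.End.mul_apply, ih, transferOp_tensorPow]

end TensorPower

section InactiveLinks

/-- The real-valued mass function of `bern q`, the node weight on one layer. -/
def bernMass (q : ℝ) (t : Bool) : ℝ := if t then q else 1 - q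

/-- The indicator that two adjacent nodes are not both active on one layer, the weight of an
inactive link there. -/
def notBoth (s t : Bool) : ℝ := if s ∧ t then 0 else 1

lemma transferOp_notBoth_true (q : ℝ) (v : Bool → ℝ) :
    transferOp (bernMass q) notBoth v true = q * v false := by
  simp [transferOp_apply, bernMass, notBoth]

lemma transferOp_notBoth_false (q : ℝ) (v : Bool → ℝ) :
    transferOp (bernMass q) notBoth v false = (1 - q) * ∑ t, v t := by
  simp [transferOp_apply, bernMass, notBoth]

lemma sum_transferOp_notBoth (q : ℝ) (v : Bool → ℝ) :
    ∑ t, transferOp (bernMass q) notBoth v t = q * v false + (1 - q) * ∑ t, v t := by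
  rw [Fintype.sum_bool, transferOp_notBoth_true, transferOp_notBoth_false]

lemma sum_transferOp_notBoth_pow (q : ℝ) (k : ℕ) :
    ∑ t, (transferOp (bernMass q) notBoth ^ k) (bernMass q) t
      = 1 - k * q ^ 2 + Ppoly q (k + 1) := by
  induction k using Nat.twoStepInduction with
  | zero => simp [bernMass, Ppoly]
  | one =>
    rw [pow_one, sum_transferOp_notBoth, Fintype.sum_bool, Ppoly]
    simp only [bernMass, if_true, Bool.false_eq_true, if_false, Nat.cast_one]
    ring
  | more k ih₀ ih₁ =>
    rw [pow_succ', Module.End.mul_apply, sum_transferOp_notBoth, ih₁, pow_succ',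
      Module.End.mul_apply, transferOp_notBoth_false, ih₀, Ppoly]
    push_cast
    ring

lemma Q0a_eq_pow (M : ℕ) (q : ℝ) (k : ℕ) :
    Q0a M q k = (1 - k * q ^ 2 + Ppoly q (k + 1)) ^ M := by
  cases k <;> simp [Q0a, Ppoly]

lemma sum_transferOp_pow_eq_Q0a (M : ℕ) (q : ℝ) (k : ℕ) :
    ∑ b, (transferOp (tensorPow (Fin M) (bernMass q)) (tensorPowKernel (Fin M) notBoth) ^ k)
      (tensorPow (Fin M) (bernMass q)) b = Q0a M q k := by
  rw [transferOp_pow_tensorPow, sum_tensorPow, sum_transferOp_notBoth_pow, Q0a_eq_pow,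
    Fintype.card_fin]

end InactiveLinks

section LinkKernel

variable {ι : Type*} [Fintype ι]

lemma tensorPowKernel_notBoth (a b : ι → Bool) [Decidable (∃ i, a i = true ∧ b i = true)] :
    tensorPowKernel ι notBoth a b = if ∃ i, a i = true ∧ b i = true then 0 else 1 := by
  split_ifs with h
  · obtain ⟨i, hi⟩ := h
    exact prod_eq_zero (mem_univ i) (if_pos hi)
  · exact prod_eq_one fun i _ => if_neg fun hi => h ⟨i, hi⟩

/-- The weight of a link prescribed to be in state `y`, as an affine function of `y`; for
`y ∈ {0, 1}` it is an indicator. -/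
def linkKernel (ι : Type*) [Fintype ι] (y : ℝ) (a b : ι → Bool) : ℝ :=
  y + ((1 - y) - y) * tensorPowKernel ι notBoth a b

lemma linkKernel_eq_ite {y : ℝ} (hy : y = 0 ∨ y = 1) (a b : ι → Bool)
    [Decidable ((∃ i, a i = true ∧ b i = true) ↔ y = 1)] :
    linkKernel ι y a b = if ((∃ i, a i = true ∧ b i = true) ↔ y = 1) then 1 else 0 := by
  classical
  rw [linkKernel, tensorPowKernel_notBoth]
  rcases hy with rfl | rfl <;> by_cases h : ∃ i, a i = true ∧ b i = true <;> simp [h]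

end LinkKernel

lemma hcoef_succ (M : ℕ) (q : ℝ) (x : ℕ → ℝ) (n : ℕ) :
    hcoef M q x (n + 1) = x (n + 1) *
      ∑ j ∈ range (n + 1),
        hcoef M q x j * Q0a M q (n - j) * ∏ l ∈ Icc (j + 1) n, ((1 - x l) - x l) := by
  cases n with
  | zero => simp [hcoef, Q0a]
  | succ n =>
    rw [hcoef, sum_attach (range (n + 2)) (fun r =>
      (1 - ((n : ℝ) + 1 - (r : ℝ)) * q ^ 2 + Ppoly q (n + 2 - r)) ^ M * hcoef M q x r
        * ∏ l ∈ Icc (r + 1) (n + 1), ((1 - x l) - x l))]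
    congr 1
    refine sum_congr rfl fun r hr => ?_
    have hrn : r ≤ n + 1 := mem_range_succ_iff.mp hr
    rw [Q0a_eq_pow, ← Nat.sub_add_comm hrn, Nat.cast_sub hrn, mul_comm (hcoef M q x r)]
    push_cast
    rfl

section Probability

lemma measureReal_pi_eq_sum_ite {ι : Type*} [Fintype ι] {α : ι → Type*} [Fintype (∀ i, α i)]
    [∀ i, MeasurableSpace (α i)] [∀ i, MeasurableSingletonClass (α i)]
    (μ : ∀ i, Measure (α i)) [∀ i, SigmaFinite (μ i)]
    (s : Set (∀ i, α i)) [DecidablePred (· ∈ s)] :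
    (Measure.pi μ).real s = ∑ ω, if ω ∈ s then ∏ i, (μ i).real {ω i} else 0 := by
  have hsingleton (ω : ∀ i, α i) : (Measure.pi μ).real {ω} = ∏ i, (μ i).real {ω i} := by
    simp only [Measure.real, Measure.pi_singleton, ENNReal.toReal_prod]
  calc (Measure.pi μ).real s = (Measure.pi μ).real ↑(univ.filter (· ∈ s)) := by
        rw [coe_filter_univ]
        rfl
    _ = ∑ ω with ω ∈ s, (Measure.pi μ).real {ω} := (sum_measureReal_singleton _).symm
    _ = ∑ ω, if ω ∈ s then ∏ i, (μ i).real {ω i} else 0 := by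
        simp only [sum_filter, hsingleton]

instance bern_isFiniteMeasure (q : ℝ) : IsFiniteMeasure (bern q) := ⟨by simp [bern]⟩

lemma bern_real_singleton {q : ℝ} (hq : q ∈ Set.Icc (0 : ℝ) 1) (t : Bool) :
    (bern q).real {t} = bernMass q t := by
  cases t <;> simp [bern, bernMass, Measure.real, hq.1, hq.2]

lemma Qabs_eq_sum_ite (M n : ℕ) {q : ℝ} (hq : q ∈ Set.Icc (0 : ℝ) 1) (x : ℕ → ℝ)
    [DecidablePred (· ∈ (cfg x : Set (Fin M × Fin (n + 1) → Bool)))] :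
    Qabs M n q x = ∑ ω : Fin M × Fin (n + 1) → Bool,
      if ω ∈ cfg x then ∏ p, bernMass q (ω p) else 0 := by
  simp only [Qabs, ← measureReal_def, lineμ, measureReal_pi_eq_sum_ite, bern_real_singleton hq]

lemma pathWeight_linkKernel {M n : ℕ} (q : ℝ) {x : ℕ → ℝ}
    (hx : ∀ j, 1 ≤ j → j ≤ n → (x j = 0 ∨ x j = 1)) (ω : Fin M × Fin (n + 1) → Bool)
    [Decidable (ω ∈ cfg x)] :
    pathWeight (tensorPow (Fin M) (bernMass q)) (fun j => linkKernel (Fin M) (x (j + 1)))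
        (fun i m => ω (m, i))
      = if ω ∈ cfg x then ∏ p, bernMass q (ω p) else 0 := by
  classical
  have hlinks : ∏ j : Fin n,
      linkKernel (Fin M) (x (j + 1)) (fun m => ω (m, j.castSucc)) (fun m => ω (m, j.succ))
        = if ω ∈ cfg x then 1 else 0 := by
    have hxj (j : Fin n) : x (j + 1) = 0 ∨ x (j + 1) = 1 := hx (j + 1) (by omega) (by omega)
    split_ifs with hω
    · exact prod_eq_one fun j _ => (linkKernel_eq_ite (hxj j) _ _).trans (if_pos (hω j))
    · obtain ⟨j, hj⟩ := not_forall.mp hω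
      exact prod_eq_zero (mem_univ j) ((linkKernel_eq_ite (hxj j) _ _).trans (if_neg hj))
  rw [pathWeight, hlinks, mul_boole, Fintype.prod_prod_type_right]
  rfl

lemma Qabs_eq_sum_chainVec (M n : ℕ) {q : ℝ} (hq : q ∈ Set.Icc (0 : ℝ) 1) {x : ℕ → ℝ}
    (hx : ∀ j, 1 ≤ j → j ≤ n → (x j = 0 ∨ x j = 1)) :
    Qabs M n q x = ∑ b,
      chainVec (tensorPow (Fin M) (bernMass q)) (fun j => linkKernel (Fin M) (x (j + 1))) n b := by
  classical
  rw [Qabs_eq_sum_ite M n hq, ← sum_pathWeight]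
  exact Fintype.sum_equiv ((Equiv.curry _ _ _).trans (Equiv.piComm _)) _ _
    fun ω => (pathWeight_linkKernel q hx ω).symm

end Probability

/-- `Q_{x^{(n)}} = ∑_{j=0}^n h_j Q_{0^{(n−j)}} ∏_{l=j+1}^n ((1−x_l)−x_l)`. -/
theorem stmt7 (M n : ℕ) (hM : 1 ≤ M) (hn : 1 ≤ n) (q : ℝ) (hq : q ∈ Set.Ioo (0 : ℝ) 1)
    (x : ℕ → ℝ) (hx : ∀ j, 1 ≤ j → j ≤ n → (x j = 0 ∨ x j = 1)) :
    Qabs M n q x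
      = ∑ j ∈ Finset.range (n + 1),
          hcoef M q x j * Q0a M q (n - j) *
            ∏ l ∈ Finset.Icc (j + 1) n, ((1 - x l) - x l) := by
  set w := tensorPow (Fin M) (bernMass q)
  set T := transferOp w (tensorPowKernel (Fin M) notBoth)
  set v := chainVec w fun j => linkKernel (Fin M) (x (j + 1))
  let φ : ((Fin M → Bool) → ℝ) →ₗ[ℝ] ℝ := ∑ b, LinearMap.proj b
  have hφ (u : (Fin M → Bool) → ℝ) : φ u = ∑ b, u b := by simp [φ]
  have hv (k : ℕ) :
      v (k + 1) = (x (k + 1) * φ (v k)) • v 0 + ((1 - x (k + 1)) - x (k + 1)) • T (v k) := by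
    rw [hφ]
    exact transferOp_affine w _ (x (k + 1)) _ (v k)
  have hT (k : ℕ) : φ ((T ^ k) (v 0)) = Q0a M q k :=
    (hφ _).trans (sum_transferOp_pow_eq_Q0a M q k)
  have h_succ (k : ℕ) : hcoef M q x (k + 1) = x (k + 1) *
      ∑ j ∈ range (k + 1), hcoef M q x j * φ ((T ^ (k - j)) (v 0))
        * ∏ l ∈ Icc (j + 1) k, ((1 - x l) - x l) := by
    simp only [hT, hcoef_succ]
  have hQ : Qabs M n q x = φ (v n) :=
    (Qabs_eq_sum_chainVec M n (Set.Ioo_subset_Icc_self hq) hx).trans (hφ _).symm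
  rw [hQ, apply_eq_sum_of_rankOne_perturbation hv (by simp [hcoef]) h_succ]
  simp only [hT]
end

section
/- Consider a sequence of M-layer models indexed by M on a fixed finite simple graph G = (V,E), with uniform parameters p_ℓ(M) = p(M) for all links and q_i(M) = q(M) for all nodes, satisfying p(M) M^{α} → c > 0 and q(M) M^{β} → d > 0 with α, β ≥ 0, and fixed threshold K ≥ 1. Then for every link ℓ ∈ E: (1) if α + 2β > 1, lim_{M→∞} P[X_ℓ = 1] = 0; (2) if α + 2β < 1, lim_{M→∞} P[X_ℓ = 1] = 1; (3) if α + 2β = 1, lim_{M→∞} P[X_ℓ = 1] = Σ_{w ≥ K} (c d²)^w e^{−c d²} / w!. -/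
open MeasureTheory Filter Finset

open scoped Classical

/-- The `M`-layer model: mutually independent Bernoulli variables `Y_{m,ℓ}` (link
thinning, probability `p ℓ`) and `Z_{m,i}` (node activation, probability `q i`). -/
noncomputable def netμ (V : Type) [Fintype V] (M : ℕ) (p : V × V → ℝ) (q : V → ℝ) :
    Measure (((Fin M × (V × V)) ⊕ (Fin M × V)) → Bool) :=
  Measure.pi fun k =>
    bern (Sum.elim (fun a : Fin M × (V × V) => p a.2) (fun a : Fin M × V => q a.2) k)

/-- Link `ℓ = (i,j)` exists on layer `m`: `Y_{m,ℓ} = Z_{m,i} = Z_{m,j} = 1`. -/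
def exOn {V : Type} {M : ℕ} (m : Fin M) (ℓ : V × V)
    (ω : ((Fin M × (V × V)) ⊕ (Fin M × V)) → Bool) : Prop :=
  ω (Sum.inl (m, ℓ)) = true ∧ ω (Sum.inr (m, ℓ.1)) = true ∧ ω (Sum.inr (m, ℓ.2)) = true

/-- `W_ℓ`: the number of layers on which link `ℓ` exists. -/
noncomputable def Wnum {V : Type} {M : ℕ} (ℓ : V × V)
    (ω : ((Fin M × (V × V)) ⊕ (Fin M × V)) → Bool) : ℕ :=
  (Finset.univ.filter fun m : Fin M => exOn m ℓ ω).card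

/-!
On each layer the link `ℓ = (i, j)` is present with probability `p_ℓ q_i q_j`, independently of the
other layers, so the number of layers containing it has the binomial law with parameters `M` and
`p_ℓ q_i q_j`, of mean asymptotic to `c d² M ^ (1 - α - 2β)`. If the mean converges, the Poisson
limit theorem gives the limit of the tail; the limit mean `0` is included, the Poisson law of rate
`0` being the point mass at `0`. If the mean diverges, the Chernoff bound sends the probability of
each individual value to `0`.
-/

section

open ProbabilityTheory unitInterval

section IndependentEvents

variable {Ω ι : Type*} [MeasurableSpace Ω] {μ : Measure Ω}

lemma hasLaw_mem_of_measure_eq [IsProbabilityMeasure μ] {A : Set Ω} {p : I} (hA : MeasurableSet A)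
    (hp : μ A = toNNReal p) : HasLaw (fun ω => ω ∈ A) (bernoulliMeasure True False p) μ where
  aemeasurable := hA.mem.aemeasurable
  map_eq := by
    have hcompl : μ Aᶜ = toNNReal (σ p) := by
      rw [prob_compl_eq_one_sub hA, hp, ← ENNReal.coe_one, ← ENNReal.coe_sub,
        ← toNNReal_add_toNNReal_symm p, add_tsub_cancel_left]
    refine Measure.ext_of_singleton fun b => ?_
    rw [Measure.map_apply hA.mem (measurableSet_singleton b), bernoulliMeasure_def]
    by_cases hb : b
    · simp [hp, hb]
    · simpa [hb, Set.compl_def] using hcompl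

lemma iIndepFun_mem_of_iIndepSet {A : ι → Set Ω} (hind : iIndepSet A μ) :
    iIndepFun (fun i ω => ω ∈ A i) μ := by
  have hone : Measurable fun n : ℕ => n = 1 := .of_discrete
  convert (hind.iIndepFun_indicator (β := ℕ)).comp _ fun _ => hone using 3
  simp [Set.indicator_apply]

lemma isSetBernoulli_of_iIndepSet {A : ι → Set Ω} {p : I} (hA : ∀ i, MeasurableSet (A i))
    (hind : iIndepSet A μ) (hp : ∀ i, μ (A i) = toNNReal p) :
    IsSetBernoulli (fun ω => {i | ω ∈ A i}) Set.univ p μ := by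
  have := hind.isProbabilityMeasure
  have hlaw := (iIndepFun_mem_of_iIndepSet hind).hasLaw_infinitePi
    (fun i => hasLaw_mem_of_measure_eq (hA i) (hp i))
    (measurable_pi_lambda _ fun i => (hA i).mem).aemeasurable
  refine HasLaw.fun_comp ⟨by fun_prop, ?_⟩ hlaw
  simp [setBernoulli_eq_map, bernoulliMeasure_def]

lemma hasLaw_ncard_of_isSetBernoulli [Countable ι] {X : Ω → Set ι} {u : Set ι} {p : I}
    (hu : u.Finite) (hX : IsSetBernoulli X u p μ) :
    HasLaw (fun ω => (X ω).ncard) (binomial u.ncard p) μ := by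
  refine HasLaw.fun_comp ⟨by fun_prop, Measure.ext_of_measureReal_singleton fun k => ?_⟩ hX
  rw [map_ncard_setBernoulli_real_singleton hu, binomial_real_singleton]

end IndependentEvents

lemma measureReal_Ici_eq_one_sub_sum (μ : Measure ℕ) [IsProbabilityMeasure μ] (K : ℕ) :
    μ.real (Set.Ici K) = 1 - ∑ w ∈ range K, μ.real {w} := by
  rw [← Set.compl_Iio, probReal_compl_eq_one_sub measurableSet_Iio, sum_measureReal_singleton,
    coe_range]

lemma tendsto_measureReal_Ici_of_singleton {ι : Type*} {l : Filter ι} {μ : ι → Measure ℕ}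
    [∀ i, IsProbabilityMeasure (μ i)] {ν : ℕ → ℝ}
    (h : ∀ w, Tendsto (fun i => (μ i).real {w}) l (nhds (ν w))) (K : ℕ) :
    Tendsto (fun i => (μ i).real (Set.Ici K)) l (nhds (1 - ∑ w ∈ range K, ν w)) := by
  simp only [measureReal_Ici_eq_one_sub_sum]
  exact tendsto_const_nhds.sub (tendsto_finsetSum _ fun w _ => h w)

lemma tendsto_binomial_real_Ici_of_tendsto_mul {p : ℕ → I} {r : NNReal}
    (hr : Tendsto (fun n : ℕ => n * (p n : ℝ)) atTop (nhds r)) (K : ℕ) :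
    Tendsto (fun n => (binomial n (p n)).real (Set.Ici K)) atTop
      (nhds ((poissonMeasure r).real (Set.Ici K))) := by
  rw [measureReal_Ici_eq_one_sub_sum (poissonMeasure r)]
  refine tendsto_measureReal_Ici_of_singleton (fun w => ?_) K
  simpa only [binomial_real_singleton, poissonMeasure_real_singleton] using
    tendsto_choose_mul_pow_of_tendsto_mul_atTop w hr

lemma pow_mul_binomial_real_singleton_le (n k : ℕ) (p : I) {s : ℝ} (hs : 0 ≤ s) :
    s ^ k * (binomial n p).real {k} ≤ Real.exp (-((1 - s) * (n * p))) := by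
  have hp0 : (0 : ℝ) ≤ p := p.2.1
  have hp1 : (0 : ℝ) ≤ 1 - p := sub_nonneg.2 p.2.2
  have hterm (j : ℕ) : 0 ≤ (s * p) ^ j * (1 - p : ℝ) ^ (n - j) * n.choose j := by positivity
  -- The left-hand side is one term of the generating function of the law at `s`.
  have hsum : s ^ k * (binomial n p).real {k} ≤ (s * p + (1 - p)) ^ n := by
    rw [binomial_real_singleton, add_pow]
    rcases le_or_gt k n with hkn | hkn
    · calc s ^ k * (n.choose k * (p : ℝ) ^ k * (1 - p) ^ (n - k))
          = (s * p) ^ k * (1 - p : ℝ) ^ (n - k) * n.choose k := by ring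
        _ ≤ _ := single_le_sum (f := fun j => (s * p) ^ j * (1 - p : ℝ) ^ (n - j) * n.choose j)
            (fun j _ => hterm j) (mem_range_succ_iff.2 hkn)
    · simpa [Nat.choose_eq_zero_of_lt hkn] using sum_nonneg fun j _ => hterm j
  calc s ^ k * (binomial n p).real {k} ≤ (s * p + (1 - p)) ^ n := hsum
    _ = (1 - (1 - s) * p) ^ n := by ring
    _ ≤ Real.exp (-((1 - s) * p)) ^ n :=
        pow_le_pow_left₀ (by nlinarith) (Real.one_sub_le_exp_neg _) n
    _ = Real.exp (-((1 - s) * (n * p))) := by rw [← Real.exp_nat_mul]; ring_nf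

lemma tendsto_binomial_real_Ici_of_tendsto_mul_atTop {p : ℕ → I}
    (hp : Tendsto (fun n : ℕ => n * (p n : ℝ)) atTop atTop) (K : ℕ) :
    Tendsto (fun n => (binomial n (p n)).real (Set.Ici K)) atTop (nhds 1) := by
  have hsingleton (w : ℕ) :
      Tendsto (fun n => (binomial n (p n)).real {w}) atTop (nhds 0) := by
    have hexp : Tendsto (fun n : ℕ => 2 ^ w * Real.exp (-((1 - 1 / 2) * (n * (p n : ℝ)))))
        atTop (nhds (2 ^ w * 0)) :=
      (Real.tendsto_exp_neg_atTop_nhds_zero.comp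
        (hp.const_mul_atTop (by norm_num))).const_mul _
    rw [mul_zero] at hexp
    refine squeeze_zero (fun n => measureReal_nonneg) (fun n => ?_) hexp
    have hle := pow_mul_binomial_real_singleton_le n w (p n) (s := 1 / 2) (by norm_num)
    rwa [one_div_pow, one_div_mul_eq_div, div_le_iff₀' (by positivity)] at hle
  simpa using tendsto_measureReal_Ici_of_singleton hsingleton K

lemma poissonMeasure_real_Ici (r : NNReal) (K : ℕ) :
    (poissonMeasure r).real (Set.Ici K) =
      ∑' w : ℕ, if K ≤ w then (r : ℝ) ^ w * Real.exp (-r) / (w.factorial : ℝ) else 0 := by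
  rw [measureReal_def, ← Measure.tsum_indicator_apply_singleton _ _ measurableSet_Ici,
    ENNReal.tsum_toReal_eq fun w => by by_cases hw : w ∈ Set.Ici K <;> simp [hw]]
  refine tsum_congr fun w => ?_
  by_cases hw : K ≤ w
  · simp [hw, ← measureReal_def, poissonMeasure_real_singleton, mul_comm]
  · simp [hw]

lemma poissonMeasure_zero : poissonMeasure 0 = Measure.dirac 0 := by
  refine Measure.ext_of_singleton fun w => ?_
  rcases w with _ | w <;> simp [poissonMeasure_singleton]

lemma tendsto_mul_mul_rpow_add {u v : ℕ → ℝ} {a b c d : ℝ}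
    (hu : Tendsto (fun n : ℕ => u n * (n : ℝ) ^ a) atTop (nhds c))
    (hv : Tendsto (fun n : ℕ => v n * (n : ℝ) ^ b) atTop (nhds d)) :
    Tendsto (fun n : ℕ => u n * v n * (n : ℝ) ^ (a + b)) atTop (nhds (c * d)) := by
  refine (hu.mul hv).congr' ?_
  filter_upwards [eventually_gt_atTop 0] with n hn
  rw [Real.rpow_add (Nat.cast_pos.2 hn), mul_mul_mul_comm]

lemma mul_rpow_mul_rpow_sub_eventuallyEq (u : ℕ → ℝ) (a b : ℝ) :
    (fun n : ℕ => u n * (n : ℝ) ^ a * (n : ℝ) ^ (b - a)) =ᶠ[atTop]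
      fun n : ℕ => u n * (n : ℝ) ^ b := by
  filter_upwards [eventually_gt_atTop 0] with n hn
  rw [mul_assoc, ← Real.rpow_add (Nat.cast_pos.2 hn), add_sub_cancel]

lemma tendsto_mul_rpow_nhds_zero {u : ℕ → ℝ} {a b c : ℝ}
    (hu : Tendsto (fun n : ℕ => u n * (n : ℝ) ^ a) atTop (nhds c)) (hba : b < a) :
    Tendsto (fun n : ℕ => u n * (n : ℝ) ^ b) atTop (nhds 0) := by
  have hpow : Tendsto (fun n : ℕ => (n : ℝ) ^ (b - a)) atTop (nhds 0) := by
    simpa only [neg_sub, Function.comp_def] using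
      (tendsto_rpow_neg_atTop (sub_pos.2 hba)).comp tendsto_natCast_atTop_atTop
  rw [← mul_zero c]
  exact (hu.mul hpow).congr' (mul_rpow_mul_rpow_sub_eventuallyEq u a b)

lemma tendsto_mul_rpow_atTop {u : ℕ → ℝ} {a b c : ℝ} (hc : 0 < c)
    (hu : Tendsto (fun n : ℕ => u n * (n : ℝ) ^ a) atTop (nhds c)) (hab : a < b) :
    Tendsto (fun n : ℕ => u n * (n : ℝ) ^ b) atTop atTop := by
  have hpow : Tendsto (fun n : ℕ => (n : ℝ) ^ (b - a)) atTop atTop :=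
    (tendsto_rpow_atTop (sub_pos.2 hab)).comp tendsto_natCast_atTop_atTop
  exact (hu.pos_mul_atTop hc hpow).congr' (mul_rpow_mul_rpow_sub_eventuallyEq u a b)

section LayerModel

variable {V : Type} [Fintype V] {M : ℕ}

lemma bern_eq_bernoulliMeasure (p : I) : bern p = bernoulliMeasure true false p := by
  have htrue : ENNReal.ofReal p = toNNReal p := ENNReal.ofReal_eq_coe_nnreal p.2.1
  have hfalse : ENNReal.ofReal (1 - p) = toNNReal (σ p) :=
    ENNReal.ofReal_eq_coe_nnreal (σ p).2.1
  rw [bern, htrue, hfalse, bernoulliMeasure_def]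
  rfl

lemma netμ_eq_pi_bernoulliMeasure (p : V × V → I) (q : V → I) :
    netμ V M (fun e => p e) (fun v => q v) =
      Measure.pi fun k => bernoulliMeasure true false
        (Sum.elim (fun a : Fin M × (V × V) => p a.2) (fun a : Fin M × V => q a.2) k) := by
  rw [netμ]
  congr 1
  funext k
  cases k <;> exact bern_eq_bernoulliMeasure _

lemma pi_bernoulliMeasure_forall_mem_eq_true {κ : Type*} [Fintype κ] (r : κ → I)
    (T : Finset κ) :
    Measure.pi (fun k => bernoulliMeasure true false (r k)) {ω | ∀ k ∈ T, ω k = true} =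
      ∏ k ∈ T, (toNNReal (r k) : ENNReal) := by
  have hset : {ω : κ → Bool | ∀ k ∈ T, ω k = true} = Set.pi T fun _ => {true} := rfl
  rw [hset, ← Measure.infinitePi_eq_pi, Measure.infinitePi_pi _ fun _ _ => .of_discrete]
  simp [bernoulliMeasure_def]

lemma netμ_biInter_exOn (p : V × V → I) (q : V → I) {ℓ : V × V} (hℓ : ℓ.1 ≠ ℓ.2)
    (s : Finset (Fin M)) :
    netμ V M (fun e => p e) (fun v => q v) (⋂ m ∈ s, {ω | exOn m ℓ ω})
      = (toNNReal (p ℓ * (q ℓ.1 * q ℓ.2)) : ENNReal) ^ #s := by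
  have hset : (⋂ m ∈ s, {ω | exOn m ℓ ω})
      = {ω | ∀ k ∈ (s ×ˢ {ℓ}).disjSum (s ×ˢ {ℓ.1, ℓ.2}), ω k = true} := by
    ext ω
    simp only [Set.mem_iInter, Set.mem_ofPred_eq, exOn, Sum.forall, inl_mem_disjSum,
      inr_mem_disjSum, mem_product, mem_singleton, mem_insert, Prod.forall]
    grind
  rw [hset, netμ_eq_pi_bernoulliMeasure, pi_bernoulliMeasure_forall_mem_eq_true, prod_disjSum]
  simp only [Sum.elim_inl, Sum.elim_inr, prod_product, prod_singleton, prod_pair hℓ, prod_const]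
  rw [← mul_pow]
  norm_cast

lemma hasLaw_Wnum (p : V × V → I) (q : V → I) {ℓ : V × V} (hℓ : ℓ.1 ≠ ℓ.2) :
    HasLaw (Wnum ℓ) (binomial M (p ℓ * (q ℓ.1 * q ℓ.2)))
      (netμ V M (fun e => p e) (fun v => q v)) := by
  have hone (m : Fin M) : netμ V M (fun e => p e) (fun v => q v) {ω | exOn m ℓ ω}
      = toNNReal (p ℓ * (q ℓ.1 * q ℓ.2)) := by
    simpa using netμ_biInter_exOn p q hℓ {m}
  have hmeas (m : Fin M) : MeasurableSet {ω | exOn (V := V) m ℓ ω} :=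
    (Set.toFinite _).measurableSet
  have hind : iIndepSet (fun m : Fin M => {ω | exOn m ℓ ω})
      (netμ V M (fun e => p e) (fun v => q v)) := by
    rw [iIndepSet_iff_meas_biInter hmeas]
    intro s
    simp only [netμ_biInter_exOn p q hℓ, hone, prod_const]
  have hlaw := hasLaw_ncard_of_isSetBernoulli Set.finite_univ
    (isSetBernoulli_of_iIndepSet hmeas hind hone)
  have hcard (ω) : Set.ncard {m : Fin M | exOn m ℓ ω} = Wnum ℓ ω := by
    rw [Set.ncard_eq_toFinset_card', Set.toFinset_ofPred, Wnum]
  simpa [hcard] using hlaw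

lemma toReal_netμ_le_Wnum (p : V × V → I) (q : V → I) {ℓ : V × V} (hℓ : ℓ.1 ≠ ℓ.2) (K : ℕ) :
    (netμ V M (fun e => p e) (fun v => q v) {ω | K ≤ Wnum ℓ ω}).toReal =
      (binomial M (p ℓ * (q ℓ.1 * q ℓ.2))).real (Set.Ici K) :=
  (hasLaw_Wnum p q hℓ).measureReal_eq measurableSet_Ici

theorem stmt13_general {p : ℕ → V × V → I} {q : ℕ → V → I}
    {ℓ : V × V} (hℓ : ℓ.1 ≠ ℓ.2) {α β₁ β₂ c d₁ d₂ : ℝ} (hc : 0 < c) (hd₁ : 0 < d₁)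
    (hd₂ : 0 < d₂) (hp : Tendsto (fun M : ℕ => (p M ℓ : ℝ) * (M : ℝ) ^ α) atTop (nhds c))
    (hq₁ : Tendsto (fun M : ℕ => (q M ℓ.1 : ℝ) * (M : ℝ) ^ β₁) atTop (nhds d₁))
    (hq₂ : Tendsto (fun M : ℕ => (q M ℓ.2 : ℝ) * (M : ℝ) ^ β₂) atTop (nhds d₂))
    {K : ℕ} (hK : 1 ≤ K) :
    (1 < α + (β₁ + β₂) →
      Tendsto (fun M : ℕ => ((netμ V M (fun e => p M e) fun v => q M v)
          {ω | K ≤ Wnum ℓ ω}).toReal) atTop (nhds 0)) ∧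
    (α + (β₁ + β₂) < 1 →
      Tendsto (fun M : ℕ => ((netμ V M (fun e => p M e) fun v => q M v)
          {ω | K ≤ Wnum ℓ ω}).toReal) atTop (nhds 1)) ∧
    (α + (β₁ + β₂) = 1 →
      Tendsto (fun M : ℕ => ((netμ V M (fun e => p M e) fun v => q M v)
          {ω | K ≤ Wnum ℓ ω}).toReal) atTop
        (nhds (∑' w : ℕ, if K ≤ w then
          (c * (d₁ * d₂)) ^ w * Real.exp (-(c * (d₁ * d₂))) / (w.factorial : ℝ) else 0))) := by
  have hr : 0 < c * (d₁ * d₂) := by positivity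
  have hscaled := tendsto_mul_mul_rpow_add hp (tendsto_mul_mul_rpow_add hq₁ hq₂)
  have hmean (M : ℕ) : (p M ℓ : ℝ) * ((q M ℓ.1 : ℝ) * q M ℓ.2) * (M : ℝ) ^ (1 : ℝ) =
      M * ((p M ℓ * (q M ℓ.1 * q M ℓ.2) : I) : ℝ) := by
    simp only [Real.rpow_one, Set.Icc.coe_mul, mul_comm]
  simp only [toReal_netμ_le_Wnum _ _ hℓ]
  refine ⟨fun hlt => ?_, fun hlt => ?_, fun heq => ?_⟩
  · have hdirac : (Measure.dirac 0 : Measure ℕ).real (Set.Ici K) = 0 := by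
      simp [measureReal_def, Nat.pos_iff_ne_zero.1 hK]
    have hzero := (tendsto_mul_rpow_nhds_zero hscaled hlt).congr hmean
    have htail := tendsto_binomial_real_Ici_of_tendsto_mul (r := 0) hzero K
    rwa [poissonMeasure_zero, hdirac] at htail
  · exact tendsto_binomial_real_Ici_of_tendsto_mul_atTop
      ((tendsto_mul_rpow_atTop hr hscaled hlt).congr hmean) K
  · rw [heq] at hscaled
    lift c * (d₁ * d₂) to NNReal using hr.le with r
    rw [← poissonMeasure_real_Ici]
    exact tendsto_binomial_real_Ici_of_tendsto_mul (hscaled.congr hmean) K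

end LayerModel

end

/-- trichotomy.  With uniform parameters `p(M) ~ c M^{−α}`,
`q(M) ~ d M^{−β}` and threshold `K`, the probability that a given link is active tends
to `0` if `α + 2β > 1`, to `1` if `α + 2β < 1`, and to `∑_{w ≥ K} π(w; c d²)` if
`α + 2β = 1`. -/
theorem stmt13 {V : Type} [Fintype V] [DecidableEq V] (E : Finset (V × V))
    (hE1 : ∀ ℓ ∈ E, ℓ.1 ≠ ℓ.2) (hE2 : ∀ ℓ ∈ E, (ℓ.2, ℓ.1) ∉ E)
    (p q : ℕ → ℝ) (hp : ∀ M, p M ∈ Set.Ioc (0 : ℝ) 1) (hq : ∀ M, q M ∈ Set.Ioc (0 : ℝ) 1)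
    (α β c d : ℝ) (hα : 0 ≤ α) (hβ : 0 ≤ β) (hc : 0 < c) (hd : 0 < d)
    (hplim : Tendsto (fun M : ℕ => p M * (M : ℝ) ^ α) atTop (nhds c))
    (hqlim : Tendsto (fun M : ℕ => q M * (M : ℝ) ^ β) atTop (nhds d))
    (K : ℕ) (hK : 1 ≤ K) (ℓ : V × V) (hℓ : ℓ ∈ E) :
    (1 < α + 2 * β →
      Tendsto (fun M : ℕ =>
          ((netμ V M (fun _ => p M) fun _ => q M) {ω | K ≤ Wnum ℓ ω}).toReal) atTop
        (nhds 0)) ∧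
    (α + 2 * β < 1 →
      Tendsto (fun M : ℕ =>
          ((netμ V M (fun _ => p M) fun _ => q M) {ω | K ≤ Wnum ℓ ω}).toReal) atTop
        (nhds 1)) ∧
    (α + 2 * β = 1 →
      Tendsto (fun M : ℕ =>
          ((netμ V M (fun _ => p M) fun _ => q M) {ω | K ≤ Wnum ℓ ω}).toReal) atTop
        (nhds (∑' w : ℕ, if K ≤ w then
          (c * d ^ 2) ^ w * Real.exp (-(c * d ^ 2)) / (w.factorial : ℝ) else 0))) := by
  simpa only [two_mul, sq] using
    stmt13_general (p := fun M _ => ⟨p M, Set.Ioc_subset_Icc_self (hp M)⟩)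
      (q := fun M _ => ⟨q M, Set.Ioc_subset_Icc_self (hq M)⟩) (hE1 ℓ hℓ) hc hd hd hplim hqlim
      hqlim hK
end
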